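/- Let π be a 321-avoiding permutation of length n with one-line notation p₁p₂…p_n, together with an assignment of a label 1 or 2 to each entry such that the entries carrying each fixed label, read from left to right, are increasing. Define a graph G on 2n vertices {c₁,…,c_n} ∪ {i₁,…,i_n} as follows: {c₁,…,c_n} is a clique, {i₁,…,i_n} is an independent set, and for each j, if p_j is labelled 1 then the neighbourhood of i_{p_j} is {c₁, c₂, …, c_{p_j}}, while if p_j is labelled 2 then the neighbourhood of i_{p_j} is {c_{p_1}, c_{p_2}, …, c_{p_j}}. Then G is a symmetric split permutation graph, witnessed by the partitions C^t = {c_{p_j} : p_j labelled t} and I^t = {i_{p_j} : p_j labelled t} for t = 1, 2. -/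

import Mathlib

/-- A permutation is 321-avoiding if there are no positions `i < j < k` with
`π i > π j > π k`. -/
def Avoids321 {n : ℕ} (π : Equiv.Perm (Fin n)) : Prop :=
  ¬ ∃ i j k : Fin n, i < j ∧ j < k ∧ π k < π j ∧ π j < π i

/-- `S` is an independent set in `G`. -/
def IndepSet {V : Type*} (G : SimpleGraph V) (S : Set V) : Prop :=
  ∀ ⦃x⦄, x ∈ S → ∀ ⦃y⦄, y ∈ S → ¬ G.Adj x y

/-- The vicinal quasi-order: `x ⊑ y` iff `N(x) ⊆ N(y) ∪ {y}`. -/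
def VicinalLE {V : Type*} (G : SimpleGraph V) (x y : V) : Prop :=
  G.neighborSet x ⊆ G.neighborSet y ∪ {y}

/-- A set of vertices is a vicinal chain if its elements are pairwise comparable in
the vicinal quasi-order. -/
def VicinalChain {V : Type*} (G : SimpleGraph V) (S : Set V) : Prop :=
  ∀ ⦃x⦄, x ∈ S → ∀ ⦃y⦄, y ∈ S → VicinalLE G x y ∨ VicinalLE G y x

/-- A graph is threshold if its whole vertex set is a vicinal chain. -/
def IsThresholdGraph {V : Type*} (G : SimpleGraph V) : Prop :=
  VicinalChain G Set.univ

/-- The universal threshold graph `T_m`: clique `c₀,…,c_{m-1}` (left summand),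
independent set `i₀,…,i_{m-1}` (right summand), with `i_j` adjacent to `c_a` iff `a ≤ j`. -/
def univThresholdGraph (m : ℕ) : SimpleGraph (Fin m ⊕ Fin m) :=
  SimpleGraph.fromRel (fun x y =>
    match x, y with
    | Sum.inl _, Sum.inl _ => True
    | Sum.inl a, Sum.inr j => (a : ℕ) ≤ (j : ℕ)
    | _, _ => False)

/-- `G` is a symmetric split permutation graph witnessed by the partition
`C = C1 ∪ C2`, `I = I1 ∪ I2`. -/
def IsSymSplitPermWith {V : Type*} (G : SimpleGraph V) (C1 C2 I1 I2 : Set V) : Prop :=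
  (C1 ∪ C2) ∪ (I1 ∪ I2) = Set.univ ∧
  Disjoint C1 C2 ∧ Disjoint I1 I2 ∧ Disjoint (C1 ∪ C2) (I1 ∪ I2) ∧
  G.IsClique (C1 ∪ C2) ∧ IndepSet G (I1 ∪ I2) ∧
  IsThresholdGraph (G.induce (C1 ∪ (I1 ∪ I2))) ∧
  IsThresholdGraph (G.induce (C2 ∪ (I1 ∪ I2))) ∧
  IsThresholdGraph (G.induce ((C1 ∪ C2) ∪ I1)) ∧
  IsThresholdGraph (G.induce ((C1 ∪ C2) ∪ I2)) ∧
  (∃ m1 : ℕ, Nonempty (G.induce (C1 ∪ I1) ≃g univThresholdGraph m1)) ∧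
  (∃ m2 : ℕ, Nonempty (G.induce (C2 ∪ I2) ≃g univThresholdGraph m2))

/-- The graph associated with a labelled 321-avoiding permutation `π` with labelling `ℓ`
(`ℓ j = false` means the entry at position `j` is labelled 1, `ℓ j = true` means it is
labelled 2; everything is 0-indexed).  The vertices are `c_a = Sum.inl a` (forming a
clique) and `i_v = Sum.inr v` (forming an independent set) for `a, v : Fin n`.  If the
entry `v` (sitting at position `π.symm v`) is labelled 1, then `i_v` is adjacent to
exactly the `c_a` with `a ≤ v`; if it is labelled 2, then `i_v` is adjacent to exactly
the `c_a` whose index occurs at a position `≤ π.symm v`, i.e. with `π.symm a ≤ π.symm v`. -/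
def phiGraph {n : ℕ} (π : Equiv.Perm (Fin n)) (ℓ : Fin n → Bool) :
    SimpleGraph (Fin n ⊕ Fin n) :=
  SimpleGraph.fromRel (fun x y =>
    match x, y with
    | Sum.inl _, Sum.inl _ => True
    | Sum.inl a, Sum.inr v =>
        if ℓ (π.symm v) then π.symm a ≤ π.symm v else a ≤ v
    | _, _ => False)

/-!
Each of the six required induced subgraphs is a split graph whose incidence between clique and
independent set is comparison in a linear order, and such a split graph is threshold. The linear
order is either the order of values or the order of positions. The neighbourhoods of `I¹` follow
values and those of `I²` follow positions. Entries with equal labels are ordered alike by value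
and by position, so seen from `C¹` every neighbourhood follows positions, and seen from `C²` every
neighbourhood follows values.
-/

section Vicinal

variable {V W : Type*} {G : SimpleGraph V} {H : SimpleGraph W}

theorem VicinalLE.of_embedding (φ : G ↪g H) {x y : V} (h : VicinalLE H (φ x) (φ y)) :
    VicinalLE G x y := by
  intro z hxz
  rcases h (φ.map_adj_iff.mpr hxz) with hyz | hzy
  · exact Or.inl (φ.map_adj_iff.mp hyz)
  · exact Or.inr (φ.injective hzy)

theorem IsThresholdGraph.of_embedding (hH : IsThresholdGraph H) (φ : G ↪g H) :
    IsThresholdGraph G := fun x _ y _ =>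
  (hH (Set.mem_univ (φ x)) (Set.mem_univ (φ y))).imp (.of_embedding φ) (.of_embedding φ)

end Vicinal

/-- The split graph with clique `α`, independent set `β`, and incidence relation `r` between them.
Both `phiGraph` and `univThresholdGraph` have this form. -/
def splitGraph {α β : Type*} (r : α → β → Prop) : SimpleGraph (α ⊕ β) where
  Adj
    | .inl a, .inl a' => a ≠ a'
    | .inl a, .inr b => r a b
    | .inr b, .inl a => r a b
    | .inr _, .inr _ => False
  symm := ⟨by rintro (a | b) (a' | b') h <;> first | exact h | exact h.symm⟩
  loopless := ⟨by rintro (a | b) h <;> first | exact h | exact h rfl⟩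

section SplitGraph

variable {α β γ α' β' : Type*} {r : α → β → Prop}

@[simp]
theorem splitGraph_adj_inl_inl {a a' : α} : (splitGraph r).Adj (.inl a) (.inl a') ↔ a ≠ a' :=
  Iff.rfl

@[simp]
theorem splitGraph_adj_inl_inr {a : α} {b : β} : (splitGraph r).Adj (.inl a) (.inr b) ↔ r a b :=
  Iff.rfl

@[simp]
theorem splitGraph_adj_inr_inl {a : α} {b : β} : (splitGraph r).Adj (.inr b) (.inl a) ↔ r a b :=
  Iff.rfl

@[simp]
theorem not_splitGraph_adj_inr_inr (r : α → β → Prop) (b b' : β) :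
    ¬ (splitGraph r).Adj (.inr b) (.inr b') :=
  id

theorem splitGraph_isClique_image_inl (r : α → β → Prop) (s : Set α) :
    (splitGraph r).IsClique (Sum.inl '' s) := by
  rintro _ ⟨a, -, rfl⟩ _ ⟨a', -, rfl⟩ hne
  exact fun haa' => hne (congrArg Sum.inl haa')

theorem splitGraph_indepSet_image_inr (r : α → β → Prop) (t : Set β) :
    IndepSet (splitGraph r) (Sum.inr '' t) := by
  rintro _ ⟨b, -, rfl⟩ _ ⟨b', -, rfl⟩
  exact not_splitGraph_adj_inr_inr r b b'

theorem splitGraph_inl_mem_neighborSet_inl_union (r : α → β → Prop) (a c : α) :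
    Sum.inl c ∈ (splitGraph r).neighborSet (.inl a) ∪ {.inl a} := by
  by_cases hc : c = a
  · exact Or.inr (congrArg Sum.inl hc)
  · exact Or.inl (Ne.symm hc)

theorem splitGraph_vicinalLE_inl_inl {a a' : α} (h : ∀ b, r a b → r a' b) :
    VicinalLE (splitGraph r) (.inl a) (.inl a') := by
  rintro (c | b) hadj
  · exact splitGraph_inl_mem_neighborSet_inl_union r a' c
  · exact Or.inl (h b hadj)

theorem splitGraph_vicinalLE_inr_inl (r : α → β → Prop) (b : β) (a : α) :
    VicinalLE (splitGraph r) (.inr b) (.inl a) := by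
  rintro (c | b') hadj
  · exact splitGraph_inl_mem_neighborSet_inl_union r a c
  · exact absurd hadj (not_splitGraph_adj_inr_inr r b b')

theorem splitGraph_vicinalLE_inr_inr {b b' : β} (h : ∀ a, r a b → r a b') :
    VicinalLE (splitGraph r) (.inr b) (.inr b') := by
  rintro (a | c) hadj
  · exact Or.inl (h a hadj)
  · exact absurd hadj (not_splitGraph_adj_inr_inr r b c)

theorem splitGraph_isThresholdGraph_of_iff_le [LinearOrder γ] {f : α → γ} {g : β → γ}
    (h : ∀ a b, r a b ↔ f a ≤ g b) : IsThresholdGraph (splitGraph r) := by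
  have inl_inl {a a' : α} (hle : f a' ≤ f a) : VicinalLE (splitGraph r) (.inl a) (.inl a') :=
    splitGraph_vicinalLE_inl_inl fun b hab => (h a' b).mpr (hle.trans ((h a b).mp hab))
  have inr_inr {b b' : β} (hle : g b ≤ g b') : VicinalLE (splitGraph r) (.inr b) (.inr b') :=
    splitGraph_vicinalLE_inr_inr fun a hab => (h a b').mpr (((h a b).mp hab).trans hle)
  rintro (a | b) - (a' | b') -
  · exact (le_total (f a') (f a)).imp inl_inl inl_inl
  · exact Or.inr (splitGraph_vicinalLE_inr_inl r b' a)
  · exact Or.inl (splitGraph_vicinalLE_inr_inl r b a')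
  · exact (le_total (g b) (g b')).imp inr_inr inr_inr

/-- Bijections of the two sides that preserve incidence give an isomorphism of split graphs. -/
def splitGraphCongr {r' : α' → β' → Prop} (e : α ≃ α') (e' : β ≃ β')
    (h : ∀ a b, r' (e a) (e' b) ↔ r a b) : splitGraph r ≃g splitGraph r' where
  toEquiv := e.sumCongr e'
  map_rel_iff' := by rintro (a | b) (a' | b') <;> simp [h]

open scoped Classical in
/-- An induced subgraph of a split graph is the split graph of the restricted incidence relation. -/
noncomputable def splitGraphInduceIso (r : α → β → Prop) (s : Set α) (t : Set β) :
    (splitGraph r).induce (Sum.inl '' s ∪ Sum.inr '' t) ≃g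
      splitGraph fun (a : s) (b : t) => r a b :=
  RelIso.symm
    { toEquiv :=
        ((Equiv.Set.image Sum.inl s Sum.inl_injective).sumCongr
          (Equiv.Set.image Sum.inr t Sum.inr_injective)).trans
          (Equiv.Set.union Set.disjoint_image_inl_image_inr).symm
      map_rel_iff' := by rintro (a | b) (a' | b') <;> simp [Subtype.ext_iff] }

theorem splitGraph_induce_isThresholdGraph_of_iff_le [LinearOrder γ] {s : Set α} {t : Set β}
    {f : α → γ} {g : β → γ} (h : ∀ a ∈ s, ∀ b ∈ t, (r a b ↔ f a ≤ g b)) :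
    IsThresholdGraph ((splitGraph r).induce (Sum.inl '' s ∪ Sum.inr '' t)) :=
  have hrestrict : IsThresholdGraph (splitGraph fun (a : s) (b : t) => r a b) :=
    splitGraph_isThresholdGraph_of_iff_le (f := fun a : s => f a) (g := fun b : t => g b)
      fun a b => h a a.2 b b.2
  hrestrict.of_embedding (splitGraphInduceIso r s t).toEmbedding

end SplitGraph

section UnivThresholdGraph

theorem univThresholdGraph_eq_splitGraph (m : ℕ) :
    univThresholdGraph m = splitGraph fun a j : Fin m => a ≤ j := by
  ext (a | a) (b | b) <;> simp [univThresholdGraph]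

theorem nonempty_splitGraph_induce_iso_univThresholdGraph {α : Type*} [LinearOrder α]
    {r : α → α → Prop} {s : Set α} [Fintype s] (h : ∀ a ∈ s, ∀ b ∈ s, (r a b ↔ a ≤ b)) :
    Nonempty ((splitGraph r).induce (Sum.inl '' s ∪ Sum.inr '' s) ≃g
      univThresholdGraph (Fintype.card s)) := by
  rw [univThresholdGraph_eq_splitGraph]
  let e : s ≃o Fin (Fintype.card s) := (Fintype.orderIsoFinOfCardEq s rfl).symm
  have he (a b : s) : e a ≤ e b ↔ r a b := e.le_iff_le.trans (h a a.2 b b.2).symm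
  exact ⟨(splitGraphInduceIso r s s).trans (splitGraphCongr e.toEquiv e.toEquiv he)⟩

end UnivThresholdGraph

theorem isCompl_setOf_eq_false_setOf_eq_true {α : Type*} (p : α → Bool) :
    IsCompl {a | p a = false} {a | p a = true} := by
  have hcompl : {a | p a = true} = {a | p a = false}ᶜ := by
    ext a
    simp
  exact hcompl ▸ isCompl_compl

section PhiGraph

variable {n : ℕ} {π : Equiv.Perm (Fin n)} {ℓ : Fin n → Bool} {a v : Fin n}

/-- The incidence relation of `phiGraph π ℓ`: `phiRel π ℓ a v` says that `c_a` is adjacent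
to `i_v`. -/
def phiRel (π : Equiv.Perm (Fin n)) (ℓ : Fin n → Bool) (a v : Fin n) : Prop :=
  if ℓ (π.symm v) then π.symm a ≤ π.symm v else a ≤ v

theorem phiGraph_eq_splitGraph (π : Equiv.Perm (Fin n)) (ℓ : Fin n → Bool) :
    phiGraph π ℓ = splitGraph (phiRel π ℓ) := by
  ext (a | a) (b | b) <;> simp [phiGraph, phiRel]

theorem phiRel_iff_le_of_right_label_false (hv : ℓ (π.symm v) = false) :
    phiRel π ℓ a v ↔ a ≤ v := by
  simp [phiRel, hv]

theorem phiRel_iff_symm_le_symm_of_right_label_true (hv : ℓ (π.symm v) = true) :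
    phiRel π ℓ a v ↔ π.symm a ≤ π.symm v := by
  simp [phiRel, hv]

theorem symm_le_symm_iff_of_label_eq (hmono : ∀ i j : Fin n, i < j → ℓ i = ℓ j → π i < π j)
    (hlabel : ℓ (π.symm a) = ℓ (π.symm v)) : π.symm a ≤ π.symm v ↔ a ≤ v := by
  have hπ : StrictMonoOn π {i | ℓ i = ℓ (π.symm v)} := fun i hi j hj hij =>
    hmono i j hij (hi.trans hj.symm)
  simpa using (hπ.le_iff_le hlabel rfl).symm

theorem phiRel_iff_symm_le_symm_of_left_label_false
    (hmono : ∀ i j : Fin n, i < j → ℓ i = ℓ j → π i < π j) (ha : ℓ (π.symm a) = false) :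
    phiRel π ℓ a v ↔ π.symm a ≤ π.symm v := by
  cases hv : ℓ (π.symm v) with
  | false =>
    rw [phiRel_iff_le_of_right_label_false hv,
      symm_le_symm_iff_of_label_eq hmono (ha.trans hv.symm)]
  | true => exact phiRel_iff_symm_le_symm_of_right_label_true hv

theorem phiRel_iff_le_of_left_label_true
    (hmono : ∀ i j : Fin n, i < j → ℓ i = ℓ j → π i < π j) (ha : ℓ (π.symm a) = true) :
    phiRel π ℓ a v ↔ a ≤ v := by
  cases hv : ℓ (π.symm v) with
  | false => exact phiRel_iff_le_of_right_label_false hv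
  | true =>
    rw [phiRel_iff_symm_le_symm_of_right_label_true hv,
      symm_le_symm_iff_of_label_eq hmono (ha.trans hv.symm)]

end PhiGraph

/-- The graph built from a labelled 321-avoiding permutation is a symmetric split
permutation graph, witnessed by the partition `Cᵗ = {c_v : entry v labelled t}`,
`Iᵗ = {i_v : entry v labelled t}`. -/
theorem phiGraph_isSymSplitPerm (n : ℕ) (π : Equiv.Perm (Fin n)) (ℓ : Fin n → Bool)
    (havoid : Avoids321 π)
    (hmono : ∀ i j : Fin n, i < j → ℓ i = ℓ j → π i < π j) :
    IsSymSplitPermWith (phiGraph π ℓ)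
      (Sum.inl '' {a : Fin n | ℓ (π.symm a) = false})
      (Sum.inl '' {a : Fin n | ℓ (π.symm a) = true})
      (Sum.inr '' {v : Fin n | ℓ (π.symm v) = false})
      (Sum.inr '' {v : Fin n | ℓ (π.symm v) = true}) := by
  have hcompl := isCompl_setOf_eq_false_setOf_eq_true fun a => ℓ (π.symm a)
  have hunion : {a | ℓ (π.symm a) = false} ∪ {a | ℓ (π.symm a) = true} = Set.univ :=
    hcompl.sup_eq_top
  rw [phiGraph_eq_splitGraph, IsSymSplitPermWith, ← Set.image_union, ← Set.image_union, hunion]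
  refine ⟨by rw [Set.image_univ, Set.image_univ, Set.range_inl_union_range_inr],
    Set.disjoint_image_of_injective Sum.inl_injective hcompl.disjoint,
    Set.disjoint_image_of_injective Sum.inr_injective hcompl.disjoint,
    Set.disjoint_image_inl_image_inr, splitGraph_isClique_image_inl _ _,
    splitGraph_indepSet_image_inr _ _, ?C₁, ?C₂, ?I₁, ?I₂, ?univ₁, ?univ₂⟩
  case C₁ =>
    exact splitGraph_induce_isThresholdGraph_of_iff_le fun _ ha _ _ =>
      phiRel_iff_symm_le_symm_of_left_label_false hmono ha
  case C₂ =>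
    exact splitGraph_induce_isThresholdGraph_of_iff_le (f := id) (g := id) fun _ ha _ _ =>
      phiRel_iff_le_of_left_label_true hmono ha
  case I₁ =>
    exact splitGraph_induce_isThresholdGraph_of_iff_le (f := id) (g := id) fun _ _ _ hv =>
      phiRel_iff_le_of_right_label_false hv
  case I₂ =>
    exact splitGraph_induce_isThresholdGraph_of_iff_le fun _ _ _ hv =>
      phiRel_iff_symm_le_symm_of_right_label_true hv
  case univ₁ =>
    exact ⟨_, nonempty_splitGraph_induce_iso_univThresholdGraph fun _ _ _ hv =>
      phiRel_iff_le_of_right_label_false hv⟩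
  case univ₂ =>
    exact ⟨_, nonempty_splitGraph_induce_iso_univThresholdGraph fun _ ha _ _ =>
      phiRel_iff_le_of_left_label_true hmono ha⟩
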